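/- For every ε ∈ (0,1) and C_U > 0 there exist κ > 0, δ > 0, A > 0 and x₀ such that for all x ≥ x₀ and all integers M ≤ κ·x^{1/5}: #{m : 1 ≤ m ≤ U, every prime factor of m is ≤ y, gcd(m − 1, P_M(y)) = 1} ≤ A·x/(log x)^{1+δ}. -/

import Mathlib

open scoped Classical

/-- `y = exp((1−ε)·log x·log₃x/log₂x)`. -/
noncomputable def yy (ε x : ℝ) : ℝ :=
  Real.exp ((1 - ε) * Real.log x * Real.log^[3] x / Real.log^[2] x)

/-- `z = x/log₂ x`. -/
noncomputable def zz (x : ℝ) : ℝ := x / Real.log^[2] x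

/-- `U = C_U·(φ(M)/M)·x·log y/log₂ x`. -/
noncomputable def UU (CU : ℝ) (M : ℕ) (ε x : ℝ) : ℝ :=
  CU * ((M.totient : ℝ) / (M : ℝ)) * x * Real.log (yy ε x) / Real.log^[2] x

/-- `P_M(t) = ∏_{p ≤ t, p ∤ M} p`. -/
noncomputable def PM (M : ℕ) (t : ℝ) : ℕ :=
  ∏ p ∈ (Finset.range (⌊t⌋₊ + 1)).filter (fun p : ℕ => p.Prime ∧ ¬ p ∣ M), p

/-! ### Mertens-type estimates -/

lemma aux_mertens1 (n : ℕ) (hn : 1 ≤ n) :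
    ∑ p ∈ Nat.primesLE n, Real.log p / p ≤ Real.log n + Real.log 4 := by
  have hn0 : (0:ℝ) < n := by exact_mod_cast hn
  have hdvd : ∏ p ∈ Nat.primesLE n, p ^ (n / p) ∣ n.factorial := by
    apply Finset.prod_dvd_of_isRelPrime
    · intro p hp q hq hpq
      have hp' := Nat.prime_of_mem_primesLE (Finset.mem_coe.1 hp)
      have hq' := Nat.prime_of_mem_primesLE (Finset.mem_coe.1 hq)
      exact (Nat.coprime_iff_isRelPrime.1 (Nat.Coprime.pow _ _ ((Nat.coprime_primes hp' hq').2 hpq)))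
    · intro p hp
      have hp' := Nat.prime_of_mem_primesLE hp
      rw [hp'.pow_dvd_factorial_iff (b := Nat.log p n + 2) (by omega)]
      have := Finset.single_le_sum (f := fun i => n / p ^ i) (s := Finset.Ico 1 (Nat.log p n + 2))
        (fun i _ => Nat.zero_le _) (a := 1) (by simp)
      simpa using this
  have h1 : (∑ p ∈ Nat.primesLE n, ((n / p : ℕ) : ℝ) * Real.log p) ≤ n * Real.log n := by
    have h2 : ((∏ p ∈ Nat.primesLE n, p ^ (n / p) : ℕ) : ℝ) ≤ (n:ℝ) ^ n := by
      exact_mod_cast (Nat.le_of_dvd (Nat.factorial_pos n) hdvd).trans (Nat.factorial_le_pow n)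
    have h3 : 0 < ((∏ p ∈ Nat.primesLE n, p ^ (n / p) : ℕ) : ℝ) := by
      have : 0 < ∏ p ∈ Nat.primesLE n, p ^ (n / p) :=
        Finset.prod_pos fun p hp => pow_pos (Nat.prime_of_mem_primesLE hp).pos _
      exact_mod_cast this
    have h4 := Real.log_le_log h3 h2
    rw [Real.log_pow] at h4
    push_cast at h4
    rw [Real.log_prod] at h4
    · simpa [Real.log_pow] using h4
    · intro p hp
      have := (Nat.prime_of_mem_primesLE hp).pos
      positivity
  have h5 : (∑ p ∈ Nat.primesLE n, ((n:ℝ) / p - 1) * Real.log p) ≤ n * Real.log n := by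
    refine le_trans (Finset.sum_le_sum fun p hp => ?_) h1
    have hp' := (Nat.prime_of_mem_primesLE hp).one_lt
    have : 0 ≤ Real.log p := Real.log_nonneg (by exact_mod_cast hp'.le)
    gcongr
    have := Nat.lt_floor_add_one ((n:ℝ)/p)
    rw [Nat.floor_div_eq_div] at this
    linarith
  have h6 := Chebyshev.theta_le_log4_mul_x (x := n) hn0.le
  rw [Chebyshev.theta_eq_sum_primesLE_log] at h6
  have h7 : n * (∑ p ∈ Nat.primesLE n, Real.log p / p) ≤ n * (Real.log n + Real.log 4) := by
    rw [Finset.mul_sum]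
    have : ∑ p ∈ Nat.primesLE n, (n:ℝ) * (Real.log p / p) =
      (∑ p ∈ Nat.primesLE n, ((n:ℝ) / p - 1) * Real.log p) + ∑ p ∈ Nat.primesLE n, Real.log p := by
      rw [← Finset.sum_add_distrib]
      refine Finset.sum_congr rfl fun p hp => by ring
    rw [this]
    linarith
  exact le_of_mul_le_mul_left h7 hn0

lemma aux_primesLE_succ (n : ℕ) (f : ℕ → ℝ) :
    ∑ p ∈ Nat.primesLE (n+1), f p = ∑ p ∈ Nat.primesLE n, f p + if (n+1).Prime then f (n+1) else 0 := by
  rw [Nat.primesLE_eq_filter_range, Nat.primesLE_eq_filter_range, Finset.sum_filter, Finset.sum_filter,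
    Finset.sum_range_succ]

lemma aux_mertens2_upper : ∃ C : ℝ, 0 < C ∧ ∀ n : ℕ, 2 ≤ n →
    ∑ p ∈ Nat.primesLE n, (1:ℝ) / p ≤ Real.log (Real.log n) + C := by
  set c := Real.log 4 with hc
  have hc0 : 0 < c := Real.log_pos (by norm_num)
  set D : ℝ := |Real.log (Real.log 2)| + c / Real.log 2 + 1 with hD
  have hl2 : 0 < Real.log 2 := Real.log_pos (by norm_num)
  have key : ∀ n : ℕ, 2 ≤ n → ∑ p ∈ Nat.primesLE n, (1:ℝ) / p
      - (∑ p ∈ Nat.primesLE n, Real.log p / p) / Real.log n ≤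
      Real.log (Real.log n) + D - c / Real.log n := by
    intro n hn
    induction n, hn using Nat.le_induction with
    | base =>
      have : Nat.primesLE 2 = {2} := by decide
      rw [this]
      simp only [Finset.sum_singleton, Nat.cast_ofNat]
      have h1 : (1:ℝ)/2 - Real.log 2 / 2 / Real.log 2 = 0 := by field_simp; ring
      rw [h1]
      have := neg_abs_le (Real.log (Real.log 2))
      linarith
    | succ n hn ih =>
      have hn1 : (1:ℝ) < n := by exact_mod_cast hn
      have hL : 0 < Real.log n := Real.log_pos hn1
      have hL' : Real.log n < Real.log (n+1:ℕ) := Real.log_lt_log (by linarith) (by push_cast; linarith)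
      have hL1 : 0 < Real.log (n+1:ℕ) := hL.trans hL'
      set a := Real.log n
      set b := Real.log (n+1:ℕ)
      have hA := aux_mertens1 n (by omega)
      rw [aux_primesLE_succ, aux_primesLE_succ]
      set S := ∑ p ∈ Nat.primesLE n, (1:ℝ) / p
      set A := ∑ p ∈ Nat.primesLE n, Real.log p / p
      have e1 : (S + if (n+1).Prime then (1:ℝ) / (n+1:ℕ) else 0) -
          (A + if (n+1).Prime then b / (n+1:ℕ) else 0) / b = S - A / b := by
        split_ifs
        · field_simp; ring
        · simp
      rw [e1]
      have e2 : S - A / b = (S - A / a) + A * (1/a - 1/b) := by ring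
      have hab : 0 ≤ 1/a - 1/b := by
        have := one_div_le_one_div_of_le hL hL'.le
        linarith
      have e3 : A * (1/a - 1/b) ≤ (a + c) * (1/a-1/b) := by gcongr
      have e4 : (a+c) * (1/a-1/b) = (1 - a / b) + c/a - c/b := by field_simp; ring
      have e5 : 1 - a/b ≤ Real.log b - Real.log a := by
        have := Real.log_le_sub_one_of_pos (x := a/b) (by positivity)
        rw [Real.log_div hL.ne' hL1.ne'] at this
        linarith
      linarith
  refine ⟨D + 1 + c / Real.log 2, by positivity, fun n hn => ?_⟩
  have hn1 : (1:ℝ) < n := by exact_mod_cast hn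
  have hL : 0 < Real.log n := Real.log_pos hn1
  have h1 := key n hn
  have h2 := aux_mertens1 n (by omega)
  have h3 : (∑ p ∈ Nat.primesLE n, Real.log p / p) / Real.log n ≤ 1 + c / Real.log n := by
    rw [div_le_iff₀ hL]
    have : (1 + c / Real.log n) * Real.log n = Real.log n + c := by field_simp
    linarith
  have : 0 < c / Real.log 2 := by positivity
  linarith

lemma aux_inv_one_sub_le (u : ℝ) (_h0 : 0 ≤ u) (h1 : u ≤ 3/5) :
    (1 - u)⁻¹ ≤ Real.exp (u + 3 * u ^ 2) := by
  have h : (1-u)⁻¹ ≤ 1 + (u + 3 * u^2) := by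
    rw [inv_le_iff_one_le_mul₀ (by linarith)]
    nlinarith [mul_nonneg (sq_nonneg u) (by linarith : (0:ℝ) ≤ 3/5 - u)]
  linarith [Real.add_one_le_exp (u + 3 * u^2)]

lemma aux_sum_three_half : ∃ C : ℝ, 0 < C ∧ ∀ s : Finset ℕ, ∑ p ∈ s, (p:ℝ) ^ (-(3/2:ℝ)) ≤ C := by
  have hs : Summable (fun n : ℕ => (n:ℝ) ^ (-(3/2:ℝ))) := Real.summable_nat_rpow.2 (by norm_num)
  refine ⟨∑' n : ℕ, (n:ℝ) ^ (-(3/2:ℝ)) + 1, ?_, fun s => ?_⟩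
  · have : 0 ≤ ∑' n : ℕ, (n:ℝ) ^ (-(3/2:ℝ)) := tsum_nonneg fun n => by positivity
    linarith
  · have := hs.sum_le_tsum s (fun n _ => by positivity)
    linarith

noncomputable def auxPow (σ : ℝ) : ℕ →* ℝ where
  toFun n := (n:ℝ) ^ (-σ)
  map_one' := by simp
  map_mul' a b := by
    push_cast
    exact Real.mul_rpow (by positivity) (by positivity)

lemma auxPow_apply (σ : ℝ) (n : ℕ) : auxPow σ n = (n:ℝ) ^ (-σ) := rfl

lemma aux_prime_rpow_le (σ : ℝ) (hσ : 3/4 ≤ σ) (p : ℕ) (hp : p.Prime) : (p:ℝ) ^ (-σ) ≤ 3/5 := by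
  have h2 : (2:ℝ) ≤ p := by exact_mod_cast hp.two_le
  calc (p:ℝ) ^ (-σ) ≤ (2:ℝ) ^ (-σ) := Real.rpow_le_rpow_of_nonpos (by norm_num) h2 (by linarith)
    _ ≤ (2:ℝ) ^ (-(3/4:ℝ)) := Real.rpow_le_rpow_of_exponent_le (by norm_num) (by linarith)
    _ ≤ 3/5 := by
      rw [Real.rpow_neg (by norm_num)]
      rw [inv_le_comm₀ (by positivity) (by norm_num)]
      apply le_of_pow_le_pow_left₀ (n := 4) (by norm_num) (by positivity)
      rw [← Real.rpow_natCast ((2:ℝ)^(3/4:ℝ)), ← Real.rpow_mul (by norm_num)]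
      norm_num

lemma aux_euler (σ : ℝ) (hσ : 3/4 ≤ σ) (n : ℕ) :
    HasSum (fun m : (n+1).smoothNumbers ↦ ((m:ℕ):ℝ) ^ (-σ))
      (∏ p ∈ Nat.primesLE n, (1 - (p:ℝ) ^ (-σ))⁻¹) := by
  have := (EulerProduct.summable_and_hasSum_smoothNumbers_prod_primesBelow_geometric
    (f := auxPow σ) (fun {p} hp => by
      rw [auxPow_apply, Real.norm_of_nonneg (by positivity)]
      linarith [aux_prime_rpow_le σ hσ p hp]) (n+1)).2
  exact this

lemma aux_finset_le_euler (σ : ℝ) (hσ : 3/4 ≤ σ) (n : ℕ) (T : Finset ℕ)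
    (hT : ∀ m ∈ T, m ∈ (n+1).smoothNumbers) :
    ∑ m ∈ T, (m:ℝ) ^ (-σ) ≤ ∏ p ∈ Nat.primesLE n, (1 - (p:ℝ) ^ (-σ))⁻¹ := by
  classical
  have h := aux_euler σ hσ n
  have h2 := sum_le_hasSum (T.subtype (· ∈ (n+1).smoothNumbers)) (fun m _ => by positivity) h
  refine le_trans (le_of_eq ?_) h2
  rw [Finset.sum_subtype_eq_sum_filter (f := fun m : ℕ => (m:ℝ) ^ (-σ))]
  rw [Finset.filter_true_of_mem hT]

lemma aux_euler_le_exp : ∃ C : ℝ, 0 < C ∧ ∀ (σ : ℝ), 3/4 ≤ σ → ∀ n : ℕ,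
    ∏ p ∈ Nat.primesLE n, (1 - (p:ℝ) ^ (-σ))⁻¹ ≤
      Real.exp (∑ p ∈ Nat.primesLE n, (p:ℝ) ^ (-σ) + C) := by
  obtain ⟨C, hC, h⟩ := aux_sum_three_half
  refine ⟨3 * C, by positivity, fun σ hσ n => ?_⟩
  calc ∏ p ∈ Nat.primesLE n, (1 - (p:ℝ) ^ (-σ))⁻¹
      ≤ ∏ p ∈ Nat.primesLE n, Real.exp ((p:ℝ) ^ (-σ) + 3 * (p:ℝ) ^ (-(3/2:ℝ))) := by
        apply Finset.prod_le_prod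
        · intro p hp
          have := aux_prime_rpow_le σ hσ p (Nat.prime_of_mem_primesLE hp)
          exact inv_nonneg.2 (by linarith)
        · intro p hp
          have hp' := Nat.prime_of_mem_primesLE hp
          have h1 := aux_prime_rpow_le σ hσ p hp'
          refine (aux_inv_one_sub_le _ (by positivity) h1).trans ?_
          apply Real.exp_le_exp.2
          gcongr
          rw [← Real.rpow_natCast, ← Real.rpow_mul (by positivity)]
          apply Real.rpow_le_rpow_of_exponent_le
          · exact_mod_cast hp'.one_lt.le
          · push_cast; linarith
    _ = Real.exp (∑ p ∈ Nat.primesLE n, ((p:ℝ) ^ (-σ) + 3 * (p:ℝ) ^ (-(3/2:ℝ)))) := by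
        rw [Real.exp_sum]
    _ ≤ _ := by
        apply Real.exp_le_exp.2
        rw [Finset.sum_add_distrib, ← Finset.mul_sum]
        linarith [h (Nat.primesLE n)]

lemma aux_mertens2_lower : ∃ C : ℝ, 0 < C ∧ ∀ n : ℕ, 2 ≤ n →
    Real.log (Real.log n) - C ≤ ∑ p ∈ Nat.primesLE n, (1:ℝ) / p := by
  obtain ⟨C, hC, h⟩ := aux_euler_le_exp
  refine ⟨C, hC, fun n hn => ?_⟩
  have hn1 : (1:ℝ) < n := by exact_mod_cast hn
  have hL : 0 < Real.log n := Real.log_pos hn1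
  have h1 := h 1 (by norm_num) n
  have h2 := aux_finset_le_euler 1 (by norm_num) n (Finset.Icc 1 n) (fun m hm => by
    rw [Finset.mem_Icc] at hm
    exact Nat.mem_smoothNumbers_of_lt (by omega) (by omega))
  have h3 : Real.log n ≤ ∑ m ∈ Finset.Icc 1 n, (m:ℝ) ^ (-(1:ℝ)) := by
    have := log_add_one_le_harmonic n
    rw [harmonic_eq_sum_Icc] at this
    push_cast at this
    have h4 : Real.log n ≤ Real.log (n+1) := Real.log_le_log (by linarith) (by linarith)
    simp only [Real.rpow_neg_one]
    linarith
  have h5 := Real.log_le_log hL ((h3.trans h2).trans h1)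
  rw [Real.log_exp] at h5
  simp only [Real.rpow_neg_one] at h5
  simp only [one_div]
  linarith

lemma aux_rankin : ∃ C : ℝ, 0 < C ∧ ∀ (α Y : ℝ), 0 ≤ α → α ≤ 1/4 → 2 ≤ Y → ∀ T : Finset ℕ,
    (∀ m ∈ T, m ≠ 0 ∧ ∀ p ∈ m.primeFactors, (p:ℝ) ≤ Y) →
    ∑ m ∈ T, (m:ℝ) ^ (-(1-α)) ≤ Real.log Y * Real.exp (C + α * Y ^ α * (Real.log Y + C)) := by
  obtain ⟨C1, hC1, h1⟩ := aux_euler_le_exp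
  obtain ⟨C2, hC2, h2⟩ := aux_mertens2_upper
  have hc0 : 0 < Real.log 4 := Real.log_pos (by norm_num)
  refine ⟨C1 + C2 + Real.log 4, by positivity, fun α Y hα hα' hY T hT => ?_⟩
  have hY0 : (0:ℝ) ≤ Y := by linarith
  set n := ⌊Y⌋₊ with hn
  have hn2 : 2 ≤ n := Nat.le_floor (by exact_mod_cast hY)
  have hn2' : (2:ℝ) ≤ n := by exact_mod_cast hn2
  have hnY : (n:ℝ) ≤ Y := Nat.floor_le hY0
  have hlogn : Real.log n ≤ Real.log Y := Real.log_le_log (by linarith) hnY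
  have hlogn0 : 0 < Real.log n := Real.log_pos (by linarith)
  have h3 := aux_finset_le_euler (1-α) (by linarith) n T (fun m hm => by
    obtain ⟨hm0, hm⟩ := hT m hm
    rw [Nat.mem_smoothNumbers']
    intro p hp hpm
    have := hm p (Nat.mem_primeFactors.2 ⟨hp, hpm, hm0⟩)
    exact Nat.lt_succ_of_le (Nat.le_floor this))
  refine (h3.trans (h1 (1-α) (by linarith) n)).trans ?_
  have h4 : ∑ p ∈ Nat.primesLE n, (p:ℝ) ^ (-(1-α)) ≤ Real.log (Real.log Y) + C2
      + α * Y ^ α * (Real.log Y + Real.log 4) := by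
    calc ∑ p ∈ Nat.primesLE n, (p:ℝ) ^ (-(1-α))
        ≤ ∑ p ∈ Nat.primesLE n, ((1:ℝ)/p + α * Y ^ α * (Real.log p / p)) := by
          refine Finset.sum_le_sum fun p hp => ?_
          have hp' := Nat.prime_of_mem_primesLE hp
          have hp0 : (0:ℝ) < p := by exact_mod_cast hp'.pos
          have hp1 : (1:ℝ) ≤ p := by exact_mod_cast hp'.one_lt.le
          have hpY : (p:ℝ) ≤ Y := le_trans (by exact_mod_cast Nat.le_of_mem_primesLE hp) hnY
          have e1 : (p:ℝ) ^ (-(1-α)) = (p:ℝ)^α / p := by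
            rw [show -(1-α) = α - 1 by ring, Real.rpow_sub_one hp0.ne']
          have e2 : (p:ℝ)^α ≤ 1 + α * Real.log p * (p:ℝ)^α := by
            rw [Real.rpow_def_of_pos hp0]
            set t := Real.log p * α with ht
            have := Real.add_one_le_exp (-t)
            have h' : Real.exp (-t) * Real.exp t = 1 := by rw [← Real.exp_add]; simp
            nlinarith [Real.exp_pos t]
          have e3 : (p:ℝ)^α ≤ Y^α := Real.rpow_le_rpow hp0.le hpY hα
          have e4 : 0 ≤ Real.log p := Real.log_nonneg hp1
          rw [e1]
          have e5 : (p:ℝ)^α ≤ 1 + α * Y^α * Real.log p := by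
            have : α * Real.log p * (p:ℝ)^α ≤ α * Real.log p * Y^α := by gcongr
            linarith
          calc (p:ℝ)^α / p ≤ (1 + α * Y^α * Real.log p) / p := by gcongr
            _ = _ := by ring
      _ = ∑ p ∈ Nat.primesLE n, (1:ℝ)/p + α * Y ^ α * ∑ p ∈ Nat.primesLE n, Real.log p / p := by
          rw [Finset.sum_add_distrib, Finset.mul_sum]
      _ ≤ _ := by
          have e1 := h2 n hn2
          have e2 := aux_mertens1 n (by omega)
          have e3 : Real.log (Real.log n) ≤ Real.log (Real.log Y) := Real.log_le_log hlogn0 hlogn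
          have e4 : α * Y ^ α * ∑ p ∈ Nat.primesLE n, Real.log p / p ≤
            α * Y ^ α * (Real.log Y + Real.log 4) := by
            gcongr
            linarith
          linarith
  have hlogY : 0 < Real.log Y := by linarith
  have h5 : α * Y ^ α * (Real.log Y + Real.log 4) ≤ α * Y ^ α * (Real.log Y + (C1 + C2 + Real.log 4)) := by
    gcongr
    linarith
  calc _ ≤ Real.exp (Real.log (Real.log Y) + (C1 + C2 + Real.log 4 + α * Y ^ α * (Real.log Y + (C1 + C2 + Real.log 4)))) := by
        apply Real.exp_le_exp.2
        linarith
    _ = _ := by rw [Real.exp_add, Real.exp_log hlogY]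
/-! ### Brun's pure sieve -/

lemma aux_crt (S : Finset ℕ) (hS : ∀ p ∈ S, p.Prime) (a : ℕ → ℕ) :
    ∃ r : ℕ, ∀ n : ℕ, (∀ p ∈ S, n ≡ a p [MOD p]) ↔ n ≡ r [MOD ∏ p ∈ S, p] := by
  have pp : Set.Pairwise (S : Set ℕ) (Function.onFun Nat.Coprime (fun p : ℕ => p)) := by
    intro p hp q hq hpq
    exact (Nat.coprime_primes (hS p hp) (hS q hq)).2 hpq
  obtain ⟨r, hr⟩ := Nat.chineseRemainderOfFinset a (fun p => p) S (fun p hp => (hS p hp).ne_zero) pp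
  refine ⟨r, fun n => ⟨fun h => ?_, fun h p hp => ?_⟩⟩
  · rw [Nat.modEq_iff_dvd]
    push_cast
    apply Finset.prod_dvd_of_coprime
    · intro p hp q hq hpq
      exact Nat.isCoprime_iff_coprime.2 (pp hp hq hpq)
    · intro p hp
      exact Nat.modEq_iff_dvd.1 ((h p hp).trans (hr p hp).symm)
  · exact (h.of_dvd (Finset.dvd_prod_of_mem _ hp)).trans (hr p hp)

lemma aux_count (S : Finset ℕ) (hS : ∀ p ∈ S, p.Prime) (a : ℕ → ℕ) (N : ℕ) :
    |∑ n ∈ Finset.range N, (∏ p ∈ S, if n ≡ a p [MOD p] then (1:ℝ) else 0) - N * ∏ p ∈ S, (1:ℝ)/p| ≤ 1 := by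
  obtain ⟨r, hr⟩ := aux_crt S hS a
  set d := ∏ p ∈ S, p with hd
  have hd0 : 0 < d := Finset.prod_pos fun p hp => (hS p hp).pos
  have e1 : ∑ n ∈ Finset.range N, (∏ p ∈ S, if n ≡ a p [MOD p] then (1:ℝ) else 0) =
      (N.count (· ≡ r [MOD d]) : ℝ) := by
    rw [Nat.count_eq_card_filter_range, Finset.card_filter]
    push_cast
    refine Finset.sum_congr rfl fun n _ => ?_
    rw [Finset.prod_ite_zero]
    simp only [hr n, Finset.prod_const_one]
  have e2 : ∏ p ∈ S, (1:ℝ)/p = 1 / (d:ℝ) := by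
    rw [Finset.prod_div_distrib, Finset.prod_const_one, hd]; push_cast; rfl
  rw [e1, e2, Nat.count_modEq_card _ hd0]
  have h1 := Nat.lt_floor_add_one ((N:ℝ)/d)
  have h2 := Nat.floor_le (a := (N:ℝ)/d) (by positivity)
  rw [Nat.floor_div_eq_div] at h1 h2
  rw [mul_one_div, abs_le]
  push_cast
  split_ifs <;> constructor <;> norm_num <;> linarith

lemma aux_count2 (S : Finset ℕ) (hS : ∀ p ∈ S, p.Prime) (a c : ℕ → ℕ) (N : ℕ) :
    |∑ n ∈ Finset.range N, (∏ p ∈ S, ((if n ≡ a p [MOD p] then (1:ℝ) else 0) +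
        (if n ≡ c p [MOD p] then (1:ℝ) else 0))) - N * ∏ p ∈ S, (2:ℝ)/p| ≤ 2 ^ S.card := by
  have e1 : ∀ n, (∏ p ∈ S, ((if n ≡ a p [MOD p] then (1:ℝ) else 0) +
        (if n ≡ c p [MOD p] then (1:ℝ) else 0))) =
        ∑ T ∈ S.powerset, ∏ p ∈ S, if n ≡ (if p ∈ T then a p else c p) [MOD p] then (1:ℝ) else 0 := by
    intro n
    rw [Finset.prod_add]
    refine Finset.sum_congr rfl fun T hT => ?_
    rw [Finset.mem_powerset] at hT
    rw [← Finset.prod_sdiff hT, mul_comm]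
    congr 1
    · refine Finset.prod_congr rfl fun p hp => ?_
      simp [(Finset.mem_sdiff.1 hp).2]
    · refine Finset.prod_congr rfl fun p hp => ?_
      simp [hp]
  have e2 : N * ∏ p ∈ S, (2:ℝ)/p = ∑ T ∈ S.powerset, N * ∏ p ∈ S, (1:ℝ)/p := by
    rw [Finset.sum_const, Finset.card_powerset, nsmul_eq_mul, Finset.prod_div_distrib, Finset.prod_div_distrib,
      Finset.prod_const]
    push_cast
    simp only [Finset.prod_const_one]
    ring
  simp only [e1]
  rw [Finset.sum_comm, e2, ← Finset.sum_sub_distrib]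
  refine (Finset.abs_sum_le_sum_abs _ _).trans ?_
  refine (Finset.sum_le_sum fun T hT => aux_count S hS _ N).trans ?_
  simp

lemma aux_bonferroni (B : Finset ℕ) (b : ℕ) :
    (if B = ∅ then (1:ℝ) else 0) ≤ ∑ S ∈ B.powerset, if S.card ≤ 2 * b then (-1:ℝ) ^ S.card else 0 := by
  rw [Finset.sum_powerset_apply_card (fun j => if j ≤ 2 * b then (-1:ℝ)^j else 0)]
  rcases Finset.eq_empty_or_nonempty B with h | h
  · subst h; simp
  · rw [if_neg h.ne_empty]
    obtain ⟨n, hn⟩ : ∃ n, B.card = n + 1 := ⟨B.card - 1, by have := h.card_pos; omega⟩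
    rw [hn]
    have e : ∑ m ∈ Finset.range (n + 1 + 1), (n+1).choose m • (if m ≤ 2 * b then (-1:ℝ)^m else 0)
      = ∑ m ∈ Finset.range (2 * b + 1), (-1:ℝ)^m * ((n+1).choose m : ℝ) := by
      have h1 : ∀ m, (n+1).choose m • (if m ≤ 2 * b then (-1:ℝ)^m else 0) =
          if m ∈ Finset.range (2*b+1) then (-1:ℝ)^m * ((n+1).choose m : ℝ) else 0 := by
        intro m
        simp only [Finset.mem_range, Nat.lt_succ_iff, nsmul_eq_mul]
        split_ifs <;> ring
      have h2 : ∀ m ∈ Finset.range (2*b+1), (-1:ℝ)^m * ((n+1).choose m : ℝ) =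
          if m ∈ Finset.range (n+1+1) then (-1:ℝ)^m * ((n+1).choose m : ℝ) else 0 := by
        intro m _
        split_ifs with h
        · rfl
        · rw [Nat.choose_eq_zero_of_lt (by simpa using h)]; simp
      rw [Finset.sum_congr rfl (fun m _ => h1 m), Finset.sum_congr rfl h2,
        ← Finset.sum_filter, ← Finset.sum_filter]
      congr 1
      ext m
      simp only [Finset.mem_filter]
      tauto
    rw [e]
    have := Int.alternating_sum_range_choose_eq_choose (n := n) (m := 2 * b)
    have h3 : ∑ m ∈ Finset.range (2 * b + 1), (-1:ℝ)^m * ((n+1).choose m : ℝ) = (-1)^(2*b) * (n.choose (2*b) : ℝ) := by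
      exact_mod_cast this
    rw [h3, pow_mul]
    simp

lemma aux_brun (P : Finset ℕ) (hP : ∀ p ∈ P, p.Prime) (a c : ℕ → ℕ)
    (hac : ∀ p ∈ P, ¬ a p ≡ c p [MOD p]) (N b : ℕ) (R Z : ℝ) (hR : 1 ≤ R) (hZ : 1 ≤ Z) :
    (((Finset.range N).filter (fun n => ∀ p ∈ P, ¬ n ≡ a p [MOD p] ∧ ¬ n ≡ c p [MOD p])).card : ℝ) ≤
      N * (∏ p ∈ P, (1 - (2:ℝ)/p) + (∏ p ∈ P, (1 + R * (2/p))) / R ^ (2*b)) +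
        Z ^ (2*b) * (1 + 2/Z) ^ P.card := by
  set I : ℕ → ℕ → ℝ := fun n p => (if n ≡ a p [MOD p] then (1:ℝ) else 0) +
        (if n ≡ c p [MOD p] then (1:ℝ) else 0) with hI
  set w : Finset ℕ → ℝ := fun S => if S.card ≤ 2 * b then (-1:ℝ) ^ S.card else 0 with hw
  have hIv : ∀ n, ∀ p ∈ P, I n p = if n ≡ a p [MOD p] ∨ n ≡ c p [MOD p] then 1 else 0 := by
    intro n p hp
    simp only [hI]
    by_cases h1 : n ≡ a p [MOD p] <;> by_cases h2 : n ≡ c p [MOD p]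
    · exact absurd (h1.symm.trans h2) (hac p hp)
    all_goals simp [h1, h2]
  have step1 : ∀ n, (if ∀ p ∈ P, ¬ n ≡ a p [MOD p] ∧ ¬ n ≡ c p [MOD p] then (1:ℝ) else 0) ≤
      ∑ S ∈ P.powerset, w S * ∏ p ∈ S, I n p := by
    intro n
    set B := P.filter (fun p => n ≡ a p [MOD p] ∨ n ≡ c p [MOD p]) with hB
    have hBe : (∀ p ∈ P, ¬ n ≡ a p [MOD p] ∧ ¬ n ≡ c p [MOD p]) ↔ B = ∅ := by
      rw [hB, Finset.filter_eq_empty_iff]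
      simp only [not_or]
    have h1 := aux_bonferroni B b
    simp only [hBe]
    refine h1.trans (le_of_eq ?_)
    have hsub : B.powerset ⊆ P.powerset := Finset.powerset_mono.2 (Finset.filter_subset _ _)
    rw [← Finset.sum_subset hsub]
    · refine Finset.sum_congr rfl fun S hS => ?_
      rw [Finset.mem_powerset] at hS
      have : ∏ p ∈ S, I n p = 1 := Finset.prod_eq_one fun p hp => by
        have := Finset.mem_filter.1 (hS hp)
        rw [hIv n p this.1, if_pos this.2]
      rw [this, mul_one]
    · intro S hS hSB
      rw [Finset.mem_powerset] at hS hSB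
      obtain ⟨p, hp, hpB⟩ := Finset.not_subset.1 hSB
      have : ∏ p ∈ S, I n p = 0 := Finset.prod_eq_zero hp (by
        rw [hIv n p (hS hp), if_neg]
        intro h
        exact hpB (Finset.mem_filter.2 ⟨hS hp, h⟩))
      rw [this, mul_zero]
  have step2 : (((Finset.range N).filter (fun n => ∀ p ∈ P, ¬ n ≡ a p [MOD p] ∧ ¬ n ≡ c p [MOD p])).card : ℝ)
      ≤ ∑ S ∈ P.powerset, w S * ∑ n ∈ Finset.range N, ∏ p ∈ S, I n p := by
    rw [Finset.card_filter]
    push_cast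
    refine (Finset.sum_le_sum fun n _ => step1 n).trans (le_of_eq ?_)
    rw [Finset.sum_comm]
    refine Finset.sum_congr rfl fun S _ => ?_
    rw [Finset.mul_sum]
  have hR0 : 0 < R := by linarith
  have hZ0 : 0 < Z := by linarith
  have step3 : ∀ S ∈ P.powerset, w S * ∑ n ∈ Finset.range N, ∏ p ∈ S, I n p ≤
      N * (∏ p ∈ S, (-((2:ℝ)/p)) + (∏ p ∈ S, R * ((2:ℝ)/p)) / R ^ (2*b)) + Z^(2*b) * ∏ p ∈ S, (2/Z) := by
    intro S hS
    rw [Finset.mem_powerset] at hS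
    have h1 := aux_count2 S (fun p hp => hP p (hS hp)) a c N
    rw [abs_le] at h1
    have g0 : 0 ≤ ∏ p ∈ S, (2:ℝ)/p := Finset.prod_nonneg fun p _ => by positivity
    set G := ∏ p ∈ S, (2:ℝ)/p
    set Q := ∑ n ∈ Finset.range N, ∏ p ∈ S, I n p
    have e1 : ∏ p ∈ S, (-((2:ℝ)/p)) = (-1)^S.card * G := by
      rw [Finset.prod_neg]
    have e2 : ∏ p ∈ S, R * ((2:ℝ)/p) = R^S.card * G := by
      rw [Finset.prod_mul_distrib, Finset.prod_const]
    rw [e1, e2, Finset.prod_const]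
    have hN0 : (0:ℝ) ≤ N := Nat.cast_nonneg N
    simp only [hw]
    split_ifs with hc
    · have e3 : (2:ℝ)^S.card ≤ Z^(2*b) * (2/Z)^S.card := by
        rw [div_pow, mul_div_assoc', le_div_iff₀ (by positivity), mul_comm]
        gcongr
      have e4 : 0 ≤ N * ((R^S.card * G) / R^(2*b)) := by positivity
      rcases neg_one_pow_eq_or ℝ S.card with h | h <;> rw [h] <;> linarith [h1.1, h1.2]
    · have e3 : 1 * G ≤ (R^S.card * G) / R^(2*b) := by
        rw [le_div_iff₀ (by positivity), one_mul, mul_comm]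
        gcongr
        omega
      have e5 : 0 ≤ (-1)^S.card * G + (R^S.card * G) / R^(2*b) := by
        rcases neg_one_pow_eq_or ℝ S.card with h | h <;> rw [h] <;> linarith
      rw [zero_mul]
      positivity
  refine (step2.trans (Finset.sum_le_sum step3)).trans (le_of_eq ?_)
  have p1 : ∏ p ∈ P, (1 - (2:ℝ)/p) = ∑ S ∈ P.powerset, ∏ p ∈ S, (-((2:ℝ)/p)) := by
    rw [← Finset.prod_one_add]
    simp only [sub_eq_add_neg]
  have p2 : (1 + 2/Z)^P.card = ∑ S ∈ P.powerset, ∏ p ∈ S, (2/Z) := by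
    rw [← Finset.prod_one_add, Finset.prod_const]
  rw [p1, p2, Finset.prod_one_add, Finset.sum_add_distrib, ← Finset.mul_sum, ← Finset.mul_sum,
    Finset.sum_add_distrib, Finset.sum_div]
lemma aux_card_primeFactors (n : ℕ) (hn : n ≠ 0) :
    (n.primeFactors.card : ℝ) * Real.log 2 ≤ Real.log n := by
  have h1 : 2 ^ n.primeFactors.card ≤ n := by
    calc 2 ^ n.primeFactors.card ≤ ∏ p ∈ n.primeFactors, p :=
          Finset.pow_card_le_prod _ _ _ (fun p hp => (Nat.prime_of_mem_primeFactors hp).two_le)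
      _ ≤ n := Nat.le_of_dvd (Nat.pos_of_ne_zero hn) (Nat.prod_primeFactors_dvd n)
  have h2 : ((2:ℝ) ^ n.primeFactors.card) ≤ n := by exact_mod_cast h1
  have := Real.log_le_log (by positivity) h2
  rwa [Real.log_pow] at this

lemma aux_sieve_sum : ∃ C : ℝ, 0 < C ∧ ∀ (w z : ℝ) (Q : ℕ), 2 ≤ w → 4 ≤ z → Q ≠ 0 →
    Real.log Q ≤ 3 * w →
    (Real.log (Real.log z) - Real.log (Real.log w) - C ≤
      ∑ p ∈ (Nat.primesLE ⌊z⌋₊).filter (fun p : ℕ => w < p ∧ ¬ p ∣ Q), (1:ℝ)/p) ∧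
    ∑ p ∈ (Nat.primesLE ⌊z⌋₊).filter (fun p : ℕ => w < p ∧ ¬ p ∣ Q), (1:ℝ)/p ≤
      Real.log (Real.log z) + C := by
  obtain ⟨C1, hC1, h1⟩ := aux_mertens2_lower
  obtain ⟨C2, hC2, h2⟩ := aux_mertens2_upper
  have hl2 : 0 < Real.log 2 := Real.log_pos (by norm_num)
  refine ⟨C1 + C2 + Real.log 2 + 3 / Real.log 2, by positivity, fun w z Q hw hz hQ hQw => ?_⟩
  have hz2 : 2 ≤ ⌊z⌋₊ := Nat.le_floor (by push_cast; linarith)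
  have hw2 : 2 ≤ ⌊w⌋₊ := Nat.le_floor (by push_cast; linarith)
  have hw2' : (2:ℝ) ≤ ⌊w⌋₊ := by exact_mod_cast hw2
  have hz2' : (2:ℝ) ≤ ⌊z⌋₊ := by exact_mod_cast hz2
  have hzf : (⌊z⌋₊:ℝ) ≤ z := Nat.floor_le (by linarith)
  have hwf : (⌊w⌋₊:ℝ) ≤ w := Nat.floor_le (by linarith)
  have hlogz : 0 < Real.log ⌊z⌋₊ := Real.log_pos (by linarith)
  have hlogw : 0 < Real.log ⌊w⌋₊ := Real.log_pos (by linarith)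
  have h2z := h2 _ hz2
  have h2w := h2 _ hw2
  have h1z := h1 _ hz2
  have a1 : Real.log (Real.log ⌊z⌋₊) ≤ Real.log (Real.log z) :=
    Real.log_le_log hlogz (Real.log_le_log (by linarith) hzf)
  have a2 : Real.log (Real.log ⌊w⌋₊) ≤ Real.log (Real.log w) :=
    Real.log_le_log hlogw (Real.log_le_log (by linarith) hwf)
  have a3 : Real.log (Real.log z) - Real.log 2 ≤ Real.log (Real.log ⌊z⌋₊) := by
    have hlz : 0 < Real.log z := Real.log_pos (by linarith)
    rw [← Real.log_div hlz.ne' (by norm_num)]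
    apply Real.log_le_log (by positivity)
    rw [div_le_iff₀ (by norm_num)]
    have : z ≤ (⌊z⌋₊:ℝ)^2 := by
      have := Nat.lt_floor_add_one z
      nlinarith
    have := Real.log_le_log (by linarith) this
    rw [Real.log_pow] at this
    push_cast at this
    linarith
  have hd : 0 < 3 / Real.log 2 := by positivity
  constructor
  · have hsub : ∑ p ∈ Nat.primesLE ⌊z⌋₊, (1:ℝ)/p ≤
        ∑ p ∈ (Nat.primesLE ⌊z⌋₊).filter (fun p : ℕ => w < p ∧ ¬ p ∣ Q), (1:ℝ)/p +
        (∑ p ∈ Nat.primesLE ⌊w⌋₊, (1:ℝ)/p + ∑ p ∈ Q.primeFactors, 1 / w) := by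
      have hss : ∑ p ∈ Nat.primesLE ⌊z⌋₊, (1:ℝ)/p =
        ∑ p ∈ Nat.primesLE ⌊z⌋₊, ((if w < p ∧ ¬ p ∣ Q then (1:ℝ)/p else 0) +
          ((if (p:ℝ) ≤ w then (1:ℝ)/p else 0) + (if w < p ∧ p ∣ Q then (1:ℝ)/p else 0))) := by
        refine Finset.sum_congr rfl fun p _ => ?_
        by_cases c1 : w < (p:ℝ)
        · by_cases c2 : p ∣ Q <;> simp [c1, c2, not_le.2 c1]
        · simp [c1, not_lt.1 c1]
      rw [hss, Finset.sum_add_distrib, Finset.sum_add_distrib, ← Finset.sum_filter, ← Finset.sum_filter,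
        ← Finset.sum_filter]
      refine add_le_add le_rfl (add_le_add ?_ ?_)
      · apply Finset.sum_le_sum_of_subset_of_nonneg
        · intro p hp
          rw [Finset.mem_filter, Nat.mem_primesLE] at hp
          rw [Nat.mem_primesLE]
          exact ⟨Nat.le_floor hp.2, hp.1.2⟩
        · intro p _ _
          positivity
      · calc _ ≤ ∑ p ∈ (Nat.primesLE ⌊z⌋₊).filter (fun p : ℕ => w < p ∧ p ∣ Q), 1 / w := by
              refine Finset.sum_le_sum fun p hp => ?_
              have := (Finset.mem_filter.1 hp).2.1
              apply one_div_le_one_div_of_le (by linarith) this.le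
          _ ≤ _ := by
            apply Finset.sum_le_sum_of_subset_of_nonneg
            · intro p hp
              rw [Finset.mem_filter, Nat.mem_primesLE] at hp
              exact Nat.mem_primeFactors.2 ⟨hp.1.2, hp.2.2, hQ⟩
            · intro p _ _
              positivity
    have hpf : ∑ p ∈ Q.primeFactors, 1 / w ≤ 3 / Real.log 2 := by
      rw [Finset.sum_const, nsmul_eq_mul, mul_one_div, div_le_div_iff₀ (by linarith) hl2]
      linarith [aux_card_primeFactors Q hQ]
    linarith
  · have : ∑ p ∈ (Nat.primesLE ⌊z⌋₊).filter (fun p : ℕ => w < p ∧ ¬ p ∣ Q), (1:ℝ)/p ≤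
      ∑ p ∈ Nat.primesLE ⌊z⌋₊, (1:ℝ)/p := by
      apply Finset.sum_le_sum_of_subset_of_nonneg (Finset.filter_subset _ _)
      intro p _ _
      positivity
    linarith

lemma aux_sieve : ∃ C : ℝ, 0 < C ∧ ∀ (w z N : ℝ) (M k b : ℕ), 2 ≤ w → 4 ≤ z → 1 ≤ N → 1 ≤ M → 1 ≤ k →
    Real.log ((M * k : ℕ) : ℝ) ≤ 3 * w →
    (((Finset.Icc 1 ⌊N⌋₊).filter (fun n : ℕ => ∀ p : ℕ, p.Prime → w < p → (p:ℝ) ≤ z → ¬ p ∣ M →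
        ¬ p ∣ n ∧ ¬ p ∣ k * n - 1)).card : ℝ) ≤
      2 * N * (Real.exp C * (Real.log w / Real.log z) ^ 2 +
        Real.exp (6 * (Real.log (Real.log z) + C) - 2 * b)) + 8 * z ^ (2*b) := by
  obtain ⟨C, hC, h⟩ := aux_sieve_sum
  refine ⟨2 * C, by positivity, fun w z N M k b hw hz hN hM hk hQ => ?_⟩
  have hQ0 : M * k ≠ 0 := by positivity
  obtain ⟨hlo, hup⟩ := h w z (M * k) hw hz hQ0 hQ
  set P := (Nat.primesLE ⌊z⌋₊).filter (fun p : ℕ => w < p ∧ ¬ p ∣ M * k) with hPdef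
  set Sg := ∑ p ∈ P, (1:ℝ)/p with hSg
  have hPp : ∀ p ∈ P, p.Prime ∧ (p:ℝ) ≤ z ∧ w < p ∧ ¬ p ∣ M ∧ ¬ p ∣ k := by
    intro p hp
    rw [hPdef, Finset.mem_filter, Nat.mem_primesLE] at hp
    refine ⟨hp.1.2, ?_, hp.2.1, fun h => hp.2.2 (Dvd.dvd.mul_right h k), fun h => hp.2.2 (Dvd.dvd.mul_left h M)⟩
    exact (Nat.le_floor_iff (by linarith)).1 hp.1.1
  have hinv : ∀ p : ℕ, ∃ c : ℕ, p ∈ P → k * c ≡ 1 [MOD p] := by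
    intro p
    by_cases hp : p ∈ P
    · obtain ⟨h1, _, _, _, h2⟩ := hPp p hp
      have hco : Nat.gcd k p = 1 := ((Nat.Prime.coprime_iff_not_dvd h1).2 h2).symm
      obtain ⟨c, hc⟩ := Nat.exists_mul_mod_eq_one_of_coprime hco h1.one_lt
      refine ⟨c, fun _ => ?_⟩
      show _ % _ = _ % _
      rw [hc.2, Nat.mod_eq_of_lt h1.one_lt]
    · exact ⟨0, fun h => absurd h hp⟩
  choose c hc using hinv
  have hb := aux_brun P (fun p hp => (hPp p hp).1) (fun _ => 0) c (by
      intro p hp h0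
      have h1 := hc p hp
      have h2 : k * 0 ≡ k * c p [MOD p] := Nat.ModEq.mul_left k h0
      have h3 := h2.trans h1
      rw [mul_zero, Nat.modEq_iff_dvd] at h3
      have h4 : p ∣ 1 := by
        have h5 : (p:ℤ) ∣ ((1:ℕ):ℤ) := by simpa using h3
        exact_mod_cast h5
      exact (hPp p hp).1.one_lt.ne' (Nat.dvd_one.1 h4)) (⌊N⌋₊ + 1) b (Real.exp 1) z
      (Real.one_le_exp (by norm_num)) (by linarith)
  have hcard : (((Finset.Icc 1 ⌊N⌋₊).filter (fun n : ℕ => ∀ p : ℕ, p.Prime → w < p → (p:ℝ) ≤ z → ¬ p ∣ M →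
        ¬ p ∣ n ∧ ¬ p ∣ k * n - 1)).card : ℝ) ≤
      (((Finset.range (⌊N⌋₊+1)).filter (fun n => ∀ p ∈ P, ¬ n ≡ 0 [MOD p] ∧ ¬ n ≡ c p [MOD p])).card : ℝ) := by
    have : (Finset.Icc 1 ⌊N⌋₊).filter (fun n : ℕ => ∀ p : ℕ, p.Prime → w < p → (p:ℝ) ≤ z → ¬ p ∣ M →
        ¬ p ∣ n ∧ ¬ p ∣ k * n - 1) ⊆
        (Finset.range (⌊N⌋₊+1)).filter (fun n => ∀ p ∈ P, ¬ n ≡ 0 [MOD p] ∧ ¬ n ≡ c p [MOD p]) := by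
      intro n hn
      rw [Finset.mem_filter, Finset.mem_Icc] at hn
      rw [Finset.mem_filter, Finset.mem_range]
      refine ⟨by omega, fun p hp => ?_⟩
      obtain ⟨h1, h2, h3, h4, _⟩ := hPp p hp
      obtain ⟨h5, h6⟩ := hn.2 p h1 h3 h2 h4
      refine ⟨fun h => h5 ((Nat.modEq_zero_iff_dvd).1 h), fun h => h6 ?_⟩
      have h7 : k * n ≡ 1 [MOD p] := (Nat.ModEq.mul_left k h).trans (hc p hp)
      exact (Nat.modEq_iff_dvd' (by nlinarith [hn.1.1])).1 h7.symm
    exact_mod_cast Finset.card_le_card this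
  refine (hcard.trans hb).trans ?_
  have hlz : 0 < Real.log z := Real.log_pos (by linarith)
  have hlw : 0 < Real.log w := Real.log_pos (by linarith)
  have p1 : ∏ p ∈ P, (1 - (2:ℝ)/p) ≤ Real.exp (2*C) * (Real.log w / Real.log z) ^ 2 := by
    calc ∏ p ∈ P, (1 - (2:ℝ)/p) ≤ ∏ p ∈ P, Real.exp (-(2 * ((1:ℝ)/p))) := by
          apply Finset.prod_le_prod
          · intro p hp
            have : (2:ℝ) ≤ p := by exact_mod_cast (hPp p hp).1.two_le
            rw [sub_nonneg, div_le_one (by linarith)]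
            exact this
          · intro p hp
            have := Real.add_one_le_exp (-(2 * ((1:ℝ)/p)))
            have e : (2:ℝ)/p = 2 * (1/p) := by ring
            rw [e]; linarith
      _ = Real.exp (-(2 * Sg)) := by
          rw [← Real.exp_sum, Finset.sum_neg_distrib, ← Finset.mul_sum]
      _ ≤ Real.exp (2 * C + 2 * (Real.log (Real.log w) - Real.log (Real.log z))) := by
          apply Real.exp_le_exp.2
          linarith
      _ = _ := by
          rw [Real.exp_add, ← Real.log_div hlw.ne' hlz.ne']
          congr 1
          rw [two_mul, Real.exp_add, Real.exp_log (by positivity), sq]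
  have p2 : (∏ p ∈ P, (1 + Real.exp 1 * ((2:ℝ)/p))) / Real.exp 1 ^ (2*b) ≤
      Real.exp (6 * (Real.log (Real.log z) + 2 * C) - 2 * b) := by
    rw [← Real.exp_nat_mul, Real.exp_sub]
    push_cast
    rw [mul_one]
    gcongr
    calc ∏ p ∈ P, (1 + Real.exp 1 * ((2:ℝ)/p)) ≤ ∏ p ∈ P, Real.exp (6 * ((1:ℝ)/p)) := by
          apply Finset.prod_le_prod
          · intro p hp; positivity
          · intro p hp
            have e1 := Real.add_one_le_exp (6 * ((1:ℝ)/p))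
            have e2 : Real.exp 1 * ((2:ℝ)/p) ≤ 3 * ((2:ℝ)/p) := by
              gcongr
              exact Real.exp_one_lt_three.le
            have e3 : 3 * ((2:ℝ)/p) = 6 * (1/p) := by ring
            linarith
      _ = Real.exp (6 * Sg) := by rw [← Real.exp_sum, ← Finset.mul_sum]
      _ ≤ _ := by
          apply Real.exp_le_exp.2
          linarith
  have p3 : (1 + 2/z) ^ P.card ≤ 8 := by
    have hPc : (P.card : ℝ) ≤ z := by
      have e1 : P.card ≤ (Finset.Icc 1 ⌊z⌋₊).card := by
        apply Finset.card_le_card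
        intro p hp
        have := hPp p hp
        rw [Finset.mem_Icc]
        exact ⟨this.1.one_lt.le, Nat.le_floor this.2.1⟩
      rw [Nat.card_Icc] at e1
      have e2 := Nat.floor_le (a := z) (by linarith)
      have e3 : (P.card:ℝ) ≤ ⌊z⌋₊ := by exact_mod_cast e1
      linarith
    calc (1 + 2/z) ^ P.card ≤ (Real.exp (2/z)) ^ P.card := by
          gcongr
          linarith [Real.add_one_le_exp (2/z)]
      _ = Real.exp (P.card * (2/z)) := by rw [← Real.exp_nat_mul]
      _ ≤ Real.exp 2 := by
          apply Real.exp_le_exp.2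
          rw [mul_div_assoc', div_le_iff₀ (by linarith)]
          linarith
      _ ≤ 8 := by
          have e1 : Real.exp 2 = Real.exp 1 * Real.exp 1 := by rw [← Real.exp_add]; norm_num
          have e2 := Real.exp_one_lt_d9
          have e3 := Real.exp_pos 1
          rw [e1]; nlinarith
  have hN2 : ((⌊N⌋₊ + 1 : ℕ) : ℝ) ≤ 2 * N := by
    push_cast
    have := Nat.floor_le (a := N) (by linarith)
    linarith
  have p1' := add_le_add p1 p2
  calc _ ≤ 2 * N * (Real.exp (2*C) * (Real.log w / Real.log z) ^ 2 +
        Real.exp (6 * (Real.log (Real.log z) + 2 * C) - 2 * b)) + z ^ (2*b) * 8 := by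
        refine add_le_add ?_ ?_
        · refine (mul_le_mul_of_nonneg_left p1' (Nat.cast_nonneg _)).trans ?_
          exact mul_le_mul_of_nonneg_right hN2 (by positivity)
        · gcongr
    _ = _ := by ring

lemma aux_main : ∃ C : ℝ, 0 < C ∧ ∀ (V y t z w α θ U : ℝ) (M b : ℕ), 1 ≤ V → 2 ≤ w → 4 ≤ z → z ≤ t → t ≤ y →
    0 ≤ α → α ≤ 1/4 → 0 ≤ θ → θ ≤ 1/4 → U ≤ V → 1 ≤ M → Real.log M + Real.log V ≤ 3 * w →
    ((((Finset.Icc 1 ⌊U⌋₊).filter (fun m : ℕ =>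
        (∀ p ∈ m.primeFactors, (p : ℝ) ≤ y) ∧ Nat.gcd (m - 1) (PM M y) = 1)).card : ℝ)) ≤
      V ^ (1 - θ) * (Real.log t * Real.exp (C + θ * t ^ θ * (Real.log t + C))) +
      2 * (Real.exp C * (Real.log w / Real.log z) ^ 2 +
        Real.exp (6 * (Real.log (Real.log z) + C) - 2 * b)) *
        (y ^ α * V ^ (1 - α) * (Real.log y * Real.exp (C + α * y ^ α * (Real.log y + C)))) +
      8 * z ^ (2*b) * (V / t) := by
  obtain ⟨C1, hC1, hrank⟩ := aux_rankin
  obtain ⟨C2, hC2, hsieve⟩ := aux_sieve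
  refine ⟨C1 + C2, by positivity, ?_⟩
  intro V y t z w α θ U M b hV hw hz hzt hty hα hα' hθ hθ' hUV hM hlog
  have hV0 : 0 < V := by linarith
  have hy0 : 0 < y := by linarith
  have ht0 : 0 < t := by linarith
  have hlt : 0 < Real.log t := Real.log_pos (by linarith)
  have hly : 0 < Real.log y := Real.log_pos (by linarith)
  set Sm : ℝ → ℕ → Prop := fun Y m => ∀ p ∈ m.primeFactors, (p:ℝ) ≤ Y with hSm
  set E := (Finset.Icc 1 ⌊V⌋₊).filter (fun m : ℕ => Sm t m) with hE
  set K := (Finset.Icc 1 ⌊V/t⌋₊).filter (fun k : ℕ => Sm y k) with hK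
  set N : ℕ → ℝ := fun k => min y (V / k) with hN
  set A : ℕ → Finset ℕ := fun k => (Finset.Icc 1 ⌊N k⌋₊).filter (fun n : ℕ =>
    ∀ p : ℕ, p.Prime → w < p → (p:ℝ) ≤ z → ¬ p ∣ M → ¬ p ∣ n ∧ ¬ p ∣ k * n - 1) with hA
  set S := (Finset.Icc 1 ⌊U⌋₊).filter (fun m : ℕ =>
        (∀ p ∈ m.primeFactors, (p : ℝ) ≤ y) ∧ Nat.gcd (m - 1) (PM M y) = 1) with hS
  have hsub : S ⊆ E ∪ K.biUnion (fun k => (A k).image (fun n => k * n)) := by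
    intro m hm
    rw [hS, Finset.mem_filter, Finset.mem_Icc] at hm
    obtain ⟨⟨hm1, hmU⟩, hmy, hmg⟩ := hm
    have hmV : (m:ℝ) ≤ V := by
      have h1 : 0 < ⌊U⌋₊ := by omega
      have h2 : 0 ≤ U := by
        by_contra hneg
        rw [Nat.floor_of_nonpos (by linarith)] at h1
        exact lt_irrefl _ h1
      exact ((Nat.le_floor_iff h2).1 hmU).trans hUV
    rw [Finset.mem_union]
    by_cases hsm : Sm t m
    · left
      rw [hE, Finset.mem_filter, Finset.mem_Icc]
      exact ⟨⟨hm1, Nat.le_floor hmV⟩, hsm⟩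
    · right
      simp only [hSm, not_forall, not_le] at hsm
      obtain ⟨q, hq, hqt⟩ := hsm
      have hqp := Nat.prime_of_mem_primeFactors hq
      have hqy := hmy q hq
      obtain ⟨k, rfl⟩ := Nat.dvd_of_mem_primeFactors hq
      have hk1 : 1 ≤ k := Nat.pos_of_ne_zero (by rintro rfl; simp at hm1)
      have hk0 : (0:ℝ) < k := by exact_mod_cast hk1
      push_cast at hmV
      have hqV : (q:ℝ) ≤ V / k := by rw [le_div_iff₀ hk0]; exact hmV
      have hkV : (k:ℝ) ≤ V / t := by
        rw [le_div_iff₀ ht0]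
        nlinarith
      rw [Finset.mem_biUnion]
      refine ⟨k, ?_, ?_⟩
      · rw [hK, Finset.mem_filter, Finset.mem_Icc]
        refine ⟨⟨hk1, Nat.le_floor hkV⟩, fun p hp => hmy p ?_⟩
        exact Nat.primeFactors_mono (Dvd.intro_left q rfl) (by omega) hp
      · rw [Finset.mem_image]
        refine ⟨q, ?_, mul_comm _ _⟩
        simp only [hA]
        rw [Finset.mem_filter, Finset.mem_Icc]
        refine ⟨⟨hqp.one_lt.le, Nat.le_floor (le_min hqy hqV)⟩, ?_⟩
        intro p hp hwp hpz hpM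
        constructor
        · intro hpq
          have := (Nat.prime_dvd_prime_iff_eq hp hqp).1 hpq
          subst this
          linarith
        · intro hpk
          rw [mul_comm] at hpk
          have hpP : p ∣ PM M y := by
            unfold PM
            apply Finset.dvd_prod_of_mem (fun p : ℕ => p)
            rw [Finset.mem_filter, Finset.mem_range]
            refine ⟨Nat.lt_succ_of_le (Nat.le_floor (by linarith)), hp, hpM⟩
          have := Nat.dvd_gcd hpk hpP
          rw [hmg] at this
          exact hp.one_lt.ne' (Nat.dvd_one.1 this)
  have hcard : (S.card : ℝ) ≤ E.card + ∑ k ∈ K, ((A k).card : ℝ) := by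
    have h1 : S.card ≤ E.card + ∑ k ∈ K, (A k).card := by
      refine (Finset.card_le_card hsub).trans ((Finset.card_union_le _ _).trans ?_)
      refine Nat.add_le_add_left (Finset.card_biUnion_le.trans ?_) _
      exact Finset.sum_le_sum fun k _ => Finset.card_image_le
    exact_mod_cast h1
  have hEb : (E.card : ℝ) ≤ V ^ (1 - θ) * (Real.log t * Real.exp (C1 + θ * t ^ θ * (Real.log t + C1))) := by
    have h1 := hrank θ t hθ hθ' (by linarith) E (by
      intro m hm
      rw [hE, Finset.mem_filter, Finset.mem_Icc] at hm
      exact ⟨by omega, hm.2⟩)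
    have h2 : (E.card : ℝ) ≤ ∑ m ∈ E, V ^ (1-θ) * (m:ℝ) ^ (-(1-θ)) := by
      rw [Finset.card_eq_sum_ones]
      push_cast
      refine Finset.sum_le_sum fun m hm => ?_
      rw [hE, Finset.mem_filter, Finset.mem_Icc] at hm
      have hm0 : (0:ℝ) < m := by exact_mod_cast hm.1.1
      have hmV : (m:ℝ) ≤ V := (Nat.le_floor_iff hV0.le).1 hm.1.2
      rw [Real.rpow_neg hm0.le, ← div_eq_mul_inv, le_div_iff₀ (by positivity), one_mul]
      exact Real.rpow_le_rpow hm0.le hmV (by linarith)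
    rw [← Finset.mul_sum] at h2
    refine h2.trans ?_
    gcongr
  set F := Real.exp C2 * (Real.log w / Real.log z) ^ 2 +
        Real.exp (6 * (Real.log (Real.log z) + C2) - 2 * b) with hF
  have hF0 : 0 ≤ F := by positivity
  have hAb : ∀ k ∈ K, ((A k).card : ℝ) ≤ 2 * F * (y^α * V^(1-α)) * (k:ℝ)^(-(1-α)) + 8 * z^(2*b) := by
    intro k hk
    rw [hK, Finset.mem_filter, Finset.mem_Icc] at hk
    have hk1 := hk.1.1
    have hk0 : (0:ℝ) < k := by exact_mod_cast hk1
    have hkV : (k:ℝ) ≤ V / t := (Nat.le_floor_iff (by positivity)).1 hk.1.2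
    have hkV' : (k:ℝ) * t ≤ V := by rwa [le_div_iff₀ ht0] at hkV
    have hN1 : 1 ≤ N k := by
      simp only [hN]
      refine le_min (by linarith) ?_
      rw [le_div_iff₀ hk0]
      nlinarith
    have h1 := hsieve w z (N k) M k b hw hz hN1 hM hk1 (by
      push_cast
      have hM0 : (0:ℝ) < M := by exact_mod_cast hM
      rw [Real.log_mul hM0.ne' hk0.ne']
      have : Real.log k ≤ Real.log V := Real.log_le_log hk0 (by nlinarith)
      linarith)
    have h2 : N k ≤ y^α * V^(1-α) * (k:ℝ)^(-(1-α)) := by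
      have e1 : N k = (N k)^α * (N k)^(1-α) := by
        rw [← Real.rpow_add (by linarith)]
        simp
      have e2 : V^(1-α) * (k:ℝ)^(-(1-α)) = (V/k)^(1-α) := by
        rw [Real.div_rpow hV0.le hk0.le, Real.rpow_neg hk0.le, div_eq_mul_inv]
      rw [mul_assoc, e2, e1]
      have hNk : 0 ≤ N k := by linarith
      have f1 : N k ≤ y := min_le_left _ _
      have f2 : N k ≤ V / k := min_le_right _ _
      have f3 : 0 ≤ 1 - α := by linarith
      gcongr
    calc ((A k).card : ℝ) ≤ 2 * N k * F + 8 * z^(2*b) := h1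
      _ ≤ 2 * (y^α * V^(1-α) * (k:ℝ)^(-(1-α))) * F + 8 * z^(2*b) := by gcongr
      _ = _ := by ring
  have hKc : (K.card : ℝ) ≤ V / t := by
    have e1 : K.card ≤ (Finset.Icc 1 ⌊V/t⌋₊).card := Finset.card_filter_le _ _
    rw [Nat.card_Icc] at e1
    have e2 := Nat.floor_le (a := V/t) (by positivity)
    have e3 : (K.card:ℝ) ≤ ⌊V/t⌋₊ := by exact_mod_cast e1
    linarith
  have hKb := hrank α y hα hα' (by linarith) K (by
      intro m hm
      rw [hK, Finset.mem_filter, Finset.mem_Icc] at hm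
      exact ⟨by omega, hm.2⟩)
  have hsum : ∑ k ∈ K, ((A k).card : ℝ) ≤ 2 * F * (y^α * V^(1-α)) *
      (Real.log y * Real.exp (C1 + α * y ^ α * (Real.log y + C1))) + (V/t) * (8 * z^(2*b)) := by
    refine (Finset.sum_le_sum hAb).trans ?_
    rw [Finset.sum_add_distrib, ← Finset.mul_sum, Finset.sum_const, nsmul_eq_mul]
    gcongr
  have hFF : F ≤ Real.exp (C1+C2) * (Real.log w / Real.log z) ^ 2 +
        Real.exp (6 * (Real.log (Real.log z) + (C1 + C2)) - 2 * b) := by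
    rw [hF]
    gcongr <;> linarith
  have hX1 : Real.exp (C1 + θ * t ^ θ * (Real.log t + C1)) ≤
      Real.exp (C1 + C2 + θ * t ^ θ * (Real.log t + (C1 + C2))) := by
    gcongr <;> linarith
  have hX2 : Real.exp (C1 + α * y ^ α * (Real.log y + C1)) ≤
      Real.exp (C1 + C2 + α * y ^ α * (Real.log y + (C1 + C2))) := by
    gcongr <;> linarith
  calc (S.card : ℝ) ≤ V ^ (1 - θ) * (Real.log t * Real.exp (C1 + θ * t ^ θ * (Real.log t + C1))) +
      (2 * F * (y^α * V^(1-α)) *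
      (Real.log y * Real.exp (C1 + α * y ^ α * (Real.log y + C1))) + (V/t) * (8 * z^(2*b))) := by linarith
    _ ≤ V ^ (1 - θ) * (Real.log t * Real.exp (C1 + C2 + θ * t ^ θ * (Real.log t + (C1 + C2)))) +
      (2 * (Real.exp (C1+C2) * (Real.log w / Real.log z) ^ 2 +
        Real.exp (6 * (Real.log (Real.log z) + (C1 + C2)) - 2 * b)) * (y^α * V^(1-α)) *
      (Real.log y * Real.exp (C1 + C2 + α * y ^ α * (Real.log y + (C1 + C2)))) + (V/t) * (8 * z^(2*b))) := by
        have : (0:ℝ) ≤ z := by linarith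
        gcongr
    _ = _ := by ring

lemma ev_lin (K η : ℝ) (hη : 0 < η) : ∀ᶠ s : ℝ in Filter.atTop, K * s + K ≤ Real.exp (η * s) := by
  have h1 : (fun s : ℝ => K * s + K) =o[Filter.atTop] fun s : ℝ => Real.exp (η * s) := by
    have ha : (fun s : ℝ => s ^ (1:ℝ)) =o[Filter.atTop] fun s : ℝ => Real.exp (η * s) :=
      isLittleO_rpow_exp_pos_mul_atTop 1 hη
    have hb : (fun s : ℝ => s ^ (0:ℝ)) =o[Filter.atTop] fun s : ℝ => Real.exp (η * s) :=
      isLittleO_rpow_exp_pos_mul_atTop 0 hη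
    simp only [Real.rpow_one, Real.rpow_zero] at ha hb
    simpa using (ha.const_mul_left K).add (hb.const_mul_left K)
  filter_upwards [h1.bound one_pos] with s hs
  rw [one_mul, Real.norm_eq_abs, Real.norm_eq_abs, abs_of_pos (Real.exp_pos _)] at hs
  exact (le_abs_self _).trans hs

lemma ev_log (K C ρ c : ℝ) (hρ : 0 < ρ) (hc : 0 < c) : ∀ᶠ s : ℝ in Filter.atTop,
    K + 3 * Real.log s + s ^ (1 - ρ) * (Real.log s + C) ≤ c * s := by
  have h0 : (fun s : ℝ => Real.log s) =o[Filter.atTop] fun s : ℝ => s ^ (1:ℝ) :=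
    isLittleO_log_rpow_atTop one_pos
  have h1 : (fun s : ℝ => Real.log s) =o[Filter.atTop] fun s : ℝ => s ^ ρ :=
    isLittleO_log_rpow_atTop hρ
  have hk : ∀ (k : ℝ) (r : ℝ), 0 < r → (fun _ : ℝ => k) =o[Filter.atTop] fun s : ℝ => s ^ r := by
    intro k r hr
    rw [Asymptotics.isLittleO_const_left]
    right
    exact Filter.tendsto_abs_atTop_atTop.comp (tendsto_rpow_atTop hr)
  have h2 := (Asymptotics.isBigO_refl (fun s : ℝ => s ^ (1 - ρ)) Filter.atTop).mul_isLittleO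
    (h1.add (hk C ρ hρ))
  have h3 := ((hk K 1 one_pos).add (h0.const_mul_left 3))
  filter_upwards [h2.bound (half_pos hc), h3.bound (half_pos hc), Filter.eventually_gt_atTop 0]
    with s ha hb hs
  rw [← Real.rpow_add hs] at ha
  simp only [sub_add_cancel, Real.rpow_one, Real.norm_eq_abs, abs_of_pos hs] at ha hb
  have := (le_abs_self _).trans ha
  have := (le_abs_self _).trans hb
  linarith

set_option maxHeartbeats 4000000 in
lemma aux_final (C : ℝ) (hC : 0 < C) (ε c0 lam g δ η : ℝ) (hε : 0 < ε) (hε1 : ε < 1) (hc0 : 0 ≤ c0)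
    (hlam : lam * (1 - ε) = 1 - ε/2) (hg : g = lam - 1) (hg0 : 0 < g) (hδ : δ = g/2)
    (hη : 0 < η) (hη1 : η ≤ 1/8) (hη2 : η ≤ g/16)
    (s K : ℝ) (hs : 4 ≤ s) (hK : K = 20 + δ + c0 + 4*C + 4*lam + 1/(1-ε))
    (hlin : K * s + K ≤ Real.exp (η * s))
    (hlog : (7*C + c0) + 3 * Real.log s + s ^ (1 - ε/2) * (Real.log s + C) ≤ g/4 * s)
    (hq : 1 ≤ Real.log s) (V y t z w α θ : ℝ) (b : ℕ)
    (hw : w = Real.exp s) (hV : V = Real.exp (w + s + c0))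
    (hy : y = Real.exp ((1-ε) * w * Real.log s / s)) (ht : t = Real.exp (Real.exp ((1-η)*s)))
    (hz : z = Real.exp (Real.exp ((1-2*η)*s))) (hα : α = lam * s * Real.exp (-s))
    (hθ : θ = Real.exp (-((1-η)*s))) (hb : b = ⌈5*s⌉₊) :
    (1 ≤ V ∧ 2 ≤ w ∧ 4 ≤ z ∧ z ≤ t ∧ t ≤ y ∧ 0 ≤ α ∧ α ≤ 1/4 ∧ 0 ≤ θ ∧ θ ≤ 1/4 ∧ 
      w/5 + Real.log V ≤ 3 * w) ∧
      V ^ (1 - θ) * (Real.log t * Real.exp (C + θ * t ^ θ * (Real.log t + C))) +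
      2 * (Real.exp C * (Real.log w / Real.log z) ^ 2 +
        Real.exp (6 * (Real.log (Real.log z) + C) - 2 * b)) *
        (y ^ α * V ^ (1 - α) * (Real.log y * Real.exp (C + α * y ^ α * (Real.log y + C)))) +
      8 * z ^ (2*b) * (V / t) ≤ 13 * Real.exp (w - (1+δ)*s) := by
  have hηs : 0 < η * s := by positivity
  have hηs1 : η * s ≤ 1/8 * s := by gcongr
  have hlam0 : 0 < lam := by linarith
  have hε' : 0 < 1 - ε := by linarith
  have hi : 0 < 1/(1-ε) := by positivity
  have hs0 : 0 < s := by linarith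
  have hKs : ∀ k k' : ℝ, k ≤ K → k' ≤ K → k * s + k' ≤ Real.exp (η*s) := by
    intro k k' h h'
    have := mul_le_mul_of_nonneg_right h hs0.le
    linarith
  have hδ0 : 0 < δ := by linarith
  have hmon : Real.exp (η * s) ≤ w := by
    rw [hw]; apply Real.exp_le_exp.2; linarith
  have hw0 : 0 < w := by rw [hw]; positivity
  have hexp2 : (4:ℝ) ≤ Real.exp 2 := by
    have := Real.add_one_le_exp 1
    have h2 : Real.exp 2 = Real.exp 1 * Real.exp 1 := by rw [← Real.exp_add]; norm_num
    rw [h2]; nlinarith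
  have hlt : Real.log t = Real.exp ((1-η)*s) := by rw [ht, Real.log_exp]
  have hlz : Real.log z = Real.exp ((1-2*η)*s) := by rw [hz, Real.log_exp]
  have hly : Real.log y = (1-ε) * w * Real.log s / s := by rw [hy, Real.log_exp]
  have hlw : Real.log w = s := by rw [hw, Real.log_exp]
  have hlV : Real.log V = w + s + c0 := by rw [hV, Real.log_exp]
  have hwes : w * Real.exp (-s) = 1 := by rw [hw, ← Real.exp_add]; simp
  have hαw : α * w = lam * s := by rw [hα]; linear_combination lam * s * hwes
  have hα0 : 0 ≤ α := by rw [hα]; positivity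
  have hqs : Real.log s ≤ s := (Real.log_le_sub_one_of_pos hs0).trans (by linarith)
  have hα1 : α ≤ 1/4 := by
    have h1 := hKs (4*lam) 0 (by linarith) (by linarith)
    have : α * w ≤ 1/4 * w := by linarith
    exact le_of_mul_le_mul_right this hw0
  have hθ0 : 0 < θ := by rw [hθ]; positivity
  have hθ1 : θ ≤ 1/4 := by
    rw [hθ, Real.exp_neg, one_div]
    apply inv_anti₀ (by norm_num)
    exact hexp2.trans (Real.exp_le_exp.2 (by linarith))
  have hθt : θ * Real.log t = 1 := by rw [hlt, hθ, ← Real.exp_add]; simp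
  have hθw : θ * w = Real.exp (η*s) := by rw [hθ, hw, ← Real.exp_add]; ring_nf
  have hty : Real.exp ((1-η)*s) ≤ (1-ε) * w * Real.log s / s := by
    rw [le_div_iff₀ hs0]
    have h1 := hKs (1/(1-ε)) 0 (by linarith) (by linarith)
    have h2 : s ≤ (1-ε) * Real.exp (η*s) := by
      have := mul_le_mul_of_nonneg_left h1 hε'.le
      have h3 : (1-ε) * (1/(1-ε) * s + 0) = s := by field_simp; ring
      linarith
    have h4 : Real.exp ((1-η)*s) * Real.exp (η*s) = w := by
      rw [hw, ← Real.exp_add]; ring_nf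
    calc Real.exp ((1-η)*s) * s ≤ Real.exp ((1-η)*s) * ((1-ε) * Real.exp (η*s)) := by gcongr
      _ = (1-ε) * w * 1 := by rw [← h4]; ring
      _ ≤ _ := by gcongr
  refine ⟨⟨?_, ?_, ?_, ?_, ?_, hα0, hα1, hθ0.le, hθ1, ?_⟩, ?_⟩
  · rw [hV]; apply Real.one_le_exp; positivity
  · have := hKs 0 2 (by linarith) (by linarith); linarith
  · rw [hz]
    apply hexp2.trans (Real.exp_le_exp.2 _)
    have := Real.add_one_le_exp ((1-2*η)*s)
    linarith
  · rw [hz, ht]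
    apply Real.exp_le_exp.2 (Real.exp_le_exp.2 _); linarith
  · rw [ht, hy]; exact Real.exp_le_exp.2 hty
  · rw [hlV]
    have := hKs 1 c0 (by linarith) (by linarith); linarith
  -- main estimate
  have hT1 : V ^ (1 - θ) * (Real.log t * Real.exp (C + θ * t ^ θ * (Real.log t + C)))
      ≤ Real.exp (w - (1+δ)*s) := by
    have e1 : t ^ θ = Real.exp 1 := by
      rw [Real.rpow_def_of_pos (by rw [ht]; positivity), mul_comm, hθt]
    have e2 : V ^ (1-θ) = Real.exp ((w + s + c0) * (1-θ)) := by
      rw [Real.rpow_def_of_pos (by rw [hV]; positivity), hlV]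
    have e3 : θ * t ^ θ * (Real.log t + C) ≤ 3 + 3 * C := by
      rw [e1]
      have h3 : Real.exp 1 ≤ 3 := Real.exp_one_lt_three.le
      have : θ * Real.exp 1 * (Real.log t + C) = Real.exp 1 * (1 + θ * C) := by
        linear_combination Real.exp 1 * hθt
      rw [this]
      have h1 : θ * C ≤ 1 * C := by gcongr; linarith
      have h0 : 0 ≤ θ * C := by positivity
      calc Real.exp 1 * (1 + θ * C) ≤ 3 * (1 + 1 * C) := by gcongr
        _ = _ := by ring
    rw [e2, hlt, ← Real.exp_add, ← Real.exp_add]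
    apply Real.exp_le_exp.2
    rw [← hlt]
    have := hKs (3+δ) (c0 + 4*C+3) (by linarith) (by linarith)
    have : 0 ≤ θ * (s + c0) := by positivity
    have e7 : (w + s + c0) * (1 - θ) = w + s + c0 - Real.exp (η*s) - θ * (s + c0) := by
      rw [← hθw]; ring
    have : 0 ≤ η * s := by positivity
    linarith
  have hbl : 5 * s ≤ b := by rw [hb]; exact Nat.le_ceil _
  have hbu : (b:ℝ) ≤ 5 * s + 1 := by rw [hb]; exact (Nat.ceil_lt_add_one (by positivity)).le
  have hT3 : 8 * z ^ (2*b) * (V / t) ≤ 8 * Real.exp (w - (1+δ)*s) := by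
    have e1 : z ^ (2*b) * (V / t) =
        Real.exp ((2*b) * Real.exp ((1-2*η)*s) + (w + s + c0 - Real.exp ((1-η)*s))) := by
      rw [hz, hV, ht, ← Real.exp_nat_mul, ← Real.exp_sub, ← Real.exp_add]
      push_cast; rfl
    rw [mul_assoc, e1]
    have : (2*b) * Real.exp ((1-2*η)*s) + (w + s + c0 - Real.exp ((1-η)*s)) ≤ w - (1+δ)*s := by
      have h1 : Real.exp ((1-η)*s) = Real.exp ((1-2*η)*s) * Real.exp (η*s) := by
        rw [← Real.exp_add]; ring_nf
      have h2 : 1 ≤ Real.exp ((1-2*η)*s) := Real.one_le_exp (by linarith)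
      have h3 := hKs (12+δ) (c0+2) (by linarith) (by linarith)
      rw [h1]
      have h4 : 0 ≤ (2+δ)*s+c0 := by positivity
      have h5 := mul_le_mul_of_nonneg_left h3 (zero_le_one.trans h2)
      have h6 := mul_le_mul_of_nonneg_right h2 h4
      have h7 := mul_le_mul_of_nonneg_right hbu (zero_le_one.trans h2)
      generalize Real.exp ((1-2*η)*s) = P at h5 h6 h7 ⊢
      generalize Real.exp (η*s) = R at h5 ⊢
      clear hlin hlog hmon hT1 hty
      linarith
    have := Real.exp_le_exp.2 this
    linarith
  have hT2 : 2 * (Real.exp C * (Real.log w / Real.log z) ^ 2 +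
        Real.exp (6 * (Real.log (Real.log z) + C) - 2 * b)) *
        (y ^ α * V ^ (1 - α) * (Real.log y * Real.exp (C + α * y ^ α * (Real.log y + C))))
        ≤ 4 * Real.exp (w - (1+δ)*s) := by
    set q := Real.log s with hqdef
    have hsq : s = Real.exp q := (Real.exp_log hs0).symm
    have f1 : Real.exp C * (Real.log w / Real.log z) ^ 2 ≤ Real.exp (6*C + 2*q - (2-4*η)*s) := by
      rw [hlw, hlz]
      have : (s / Real.exp ((1-2*η)*s))^2 = Real.exp (2*q - (2-4*η)*s) := by
        nth_rewrite 1 [hsq]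
        rw [← Real.exp_sub, ← Real.exp_nat_mul]; push_cast; ring_nf
      rw [this, ← Real.exp_add]
      apply Real.exp_le_exp.2; linarith
    have f2 : Real.exp (6 * (Real.log (Real.log z) + C) - 2 * b) ≤ Real.exp (6*C + 2*q - (2-4*η)*s) := by
      rw [hlz, Real.log_exp]
      apply Real.exp_le_exp.2
      have : 0 ≤ η * s := by positivity
      linarith
    have hαy : α * Real.log y = (1 - ε/2) * q := by
      rw [hly]
      have : α * ((1-ε) * w * q / s) = (α * w) * (1-ε) * q / s := by ring
      rw [this, hαw, ← hlam]; field_simp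
    have e1 : y ^ α = Real.exp ((1-ε/2)*q) := by
      rw [Real.rpow_def_of_pos (by rw [hy]; positivity), mul_comm, hαy]
    have e1' : y ^ α = s ^ (1-ε/2) := by
      rw [e1, Real.rpow_def_of_pos hs0, mul_comm]
    have e2 : V ^ (1-α) = Real.exp ((w + s + c0) * (1-α)) := by
      rw [Real.rpow_def_of_pos (by rw [hV]; positivity), hlV]
    have e4 : Real.log y ≤ Real.exp s := by
      rw [hly, ← hw, div_le_iff₀ hs0]
      have : (1-ε) * w * q ≤ 1 * w * s := by gcongr; linarith
      linarith
    have e5 : α * y ^ α * (Real.log y + C) ≤ s ^ (1-ε/2) * (q + C) := by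
      rw [e1']
      have : α * s ^ (1-ε/2) * (Real.log y + C) = s ^ (1-ε/2) * (α * Real.log y + α * C) := by ring
      rw [this, hαy]
      have u1 : (1 - ε/2) * q ≤ 1 * q := by gcongr; linarith
      have u2 : α * C ≤ 1 * C := by gcongr; linarith
      gcongr
      · linarith
      · linarith
    have e6 : y ^ α * V ^ (1 - α) * (Real.log y * Real.exp (C + α * y ^ α * (Real.log y + C)))
        ≤ Real.exp (q + (w + s + c0 - lam * s) + s + (C + s ^ (1-ε/2) * (q + C))) := by
      have hyy : 0 ≤ Real.log y := by rw [hly]; positivity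
      have g1 : y ^ α ≤ Real.exp q := by 
        rw [e1]; apply Real.exp_le_exp.2
        have : 0 ≤ ε / 2 * q := by positivity
        linarith
      have g2 : V ^ (1-α) ≤ Real.exp (w + s + c0 - lam * s) := by
        rw [e2]; apply Real.exp_le_exp.2
        have : 0 ≤ α * (s + c0) := by positivity
        have e7 : (w + s + c0) * (1 - α) = w + s + c0 - lam * s - α * (s + c0) := by
          rw [← hαw]; ring
        linarith
      have g3 : 0 ≤ V := by rw [hV]; positivity
      calc _ ≤ Real.exp q * Real.exp (w + s + c0 - lam * s) *
            (Real.exp s * Real.exp (C + s ^ (1-ε/2) * (q + C))) := by gcongr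
        _ = _ := by simp only [← Real.exp_add]; ring_nf
    have g3 : 0 ≤ V := by rw [hV]; positivity
    have g4 : 0 ≤ y := by rw [hy]; positivity
    have hyy : 0 ≤ Real.log y := by rw [hly]; positivity
    have g5 : 0 ≤ y ^ α * V ^ (1 - α) * (Real.log y * Real.exp (C + α * y ^ α * (Real.log y + C))) := by
      positivity
    calc _ ≤ 2 * (Real.exp (6*C + 2*q - (2-4*η)*s) + Real.exp (6*C + 2*q - (2-4*η)*s)) *
          Real.exp (q + (w + s + c0 - lam * s) + s + (C + s ^ (1-ε/2) * (q + C))) := by gcongr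
      _ = 4 * Real.exp ((6*C + 2*q - (2-4*η)*s) +
          (q + (w + s + c0 - lam * s) + s + (C + s ^ (1-ε/2) * (q + C)))) := by
          rw [Real.exp_add (6*C + 2*q - (2-4*η)*s)]; ring
      _ ≤ _ := by
          have : (6*C + 2*q - (2-4*η)*s) +
            (q + (w + s + c0 - lam * s) + s + (C + s ^ (1-ε/2) * (q + C))) ≤ w - (1+δ)*s := by
            have : η * s ≤ g/16 * s := by gcongr
            subst hδ
            have : lam = g + 1 := by linarith
            subst this
            generalize s ^ (1 - ε/2) * (q + C) = Q at hlog ⊢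
            linarith
          gcongr
  linarith

/-- The count of `y`-smooth `m ≤ U` with `gcd(m−1, P_M(y)) = 1` is
`≪ x/(log x)^{1+δ}` for some `δ > 0`. -/
theorem stmt7 :
    ∀ ε : ℝ, 0 < ε → ε < 1 → ∀ CU : ℝ, 0 < CU →
    ∃ κ δ A : ℝ, 0 < κ ∧ 0 < δ ∧ 0 < A ∧ ∃ x₀ : ℝ, ∀ x : ℝ, x ≥ x₀ →
    ∀ M : ℕ, 1 ≤ M → (M : ℝ) ≤ κ * x ^ ((1 : ℝ) / 5) →
    ((((Finset.Icc 1 ⌊UU CU M ε x⌋₊).filter (fun m : ℕ =>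
        (∀ p ∈ m.primeFactors, (p : ℝ) ≤ yy ε x) ∧
          Nat.gcd (m - 1) (PM M (yy ε x)) = 1)).card : ℝ))
      ≤ A * x / (Real.log x) ^ ((1 : ℝ) + δ) := by
  intro ε hε hε1 CU hCU
  obtain ⟨C, hC, hmain⟩ := aux_main
  have hε' : 0 < 1 - ε := by linarith
  obtain ⟨lam, hlam⟩ : ∃ lam : ℝ, lam * (1 - ε) = 1 - ε/2 :=
    ⟨(1 - ε/2)/(1-ε), div_mul_cancel₀ _ hε'.ne'⟩
  obtain ⟨g, hg⟩ : ∃ g : ℝ, g = lam - 1 := ⟨_, rfl⟩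
  have hg0 : 0 < g := by
    have : 0 < g * (1-ε) := by rw [hg]; nlinarith
    exact (pos_iff_pos_of_mul_pos this).2 hε'
  obtain ⟨c0, hc0, hc0'⟩ : ∃ c0 : ℝ, 0 ≤ c0 ∧ CU ≤ Real.exp c0 := by
    refine ⟨CU, hCU.le, ?_⟩
    linarith [Real.add_one_le_exp CU]
  obtain ⟨η, hη, hη1, hη2⟩ : ∃ η : ℝ, 0 < η ∧ η ≤ 1/8 ∧ η ≤ g/16 :=
    ⟨min (1/8) (g/16), by positivity, min_le_left _ _, min_le_right _ _⟩
  have hev := (((ev_lin (20 + g/2 + c0 + 4*C + 4*lam + 1/(1-ε)) η hη).and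
    (ev_log (7*C + c0) C (ε/2) (g/4) (by linarith) (by linarith))).and
    (Real.tendsto_log_atTop.eventually_ge_atTop 1)).and (Filter.eventually_ge_atTop 4)
  obtain ⟨s0, hs0⟩ := Filter.eventually_atTop.1 hev
  refine ⟨1, g/2, 13, one_pos, by linarith, by norm_num, Real.exp (Real.exp s0), ?_⟩
  intro x hx M hM1 hM
  have hxpos : 0 < x := (Real.exp_pos _).trans_le hx
  have hL : Real.exp s0 ≤ Real.log x := (Real.le_log_iff_exp_le hxpos).2 hx
  have hLpos : 0 < Real.log x := (Real.exp_pos _).trans_le hL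
  have hl : s0 ≤ Real.log (Real.log x) := (Real.le_log_iff_exp_le hLpos).2 hL
  obtain ⟨s, hsdef⟩ : ∃ s, s = Real.log (Real.log x) := ⟨_, rfl⟩
  rw [← hsdef] at hl
  have hw : Real.log x = Real.exp s := by rw [hsdef, Real.exp_log hLpos]
  obtain ⟨⟨⟨hlin, hlog⟩, hq⟩, hs4⟩ := hs0 s hl
  have hyy : yy ε x = Real.exp ((1-ε) * Real.log x * Real.log s / s) := by
    rw [hsdef]; rfl
  have hs' : 0 < s := by linarith
  obtain ⟨⟨a1, a2, a3, a4, a5, a6, a7, a8, a9, a10⟩, hfin⟩ :=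
    aux_final C hC ε c0 lam g (g/2) η hε hε1 hc0 hlam hg hg0 rfl hη hη1 hη2 s _ hs4 rfl hlin hlog hq
      _ (yy ε x) _ _ (Real.log x) _ _ _ hw rfl hyy rfl rfl rfl rfl rfl
  have hU : UU CU M ε x ≤ Real.exp (Real.log x + s + c0) := by
    have h1 : UU CU M ε x = CU * ((M.totient : ℝ) / (M : ℝ)) * x * ((1-ε) * Real.log x * Real.log s / s) / s := by
      unfold UU
      rw [hyy, Real.log_exp, hsdef]; rfl
    have h2 : (M.totient : ℝ) / (M : ℝ) ≤ 1 :=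
      div_le_one_of_le₀ (by exact_mod_cast Nat.totient_le M) (by positivity)
    have hqs : Real.log s ≤ s := (Real.log_le_sub_one_of_pos hs').trans (by linarith)
    have h3 : (1-ε) * Real.log x * Real.log s / s ≤ Real.log x * s := by
      rw [div_le_iff₀ hs']
      have : (1-ε) * Real.log x * Real.log s ≤ 1 * Real.log x * s := by gcongr; linarith
      have h4 : Real.log x * s * 1 ≤ Real.log x * s * s := by gcongr; linarith
      linarith
    rw [h1, div_le_iff₀ hs', Real.exp_add, Real.exp_add, Real.exp_log hxpos, ← hw]
    calc _ ≤ Real.exp c0 * 1 * x * (Real.log x * s) := by gcongr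
      _ = _ := by ring
  have hlogM : Real.log M ≤ Real.log x / 5 := by
    rw [one_mul] at hM
    have := Real.log_le_log (by exact_mod_cast hM1) hM
    rw [Real.log_rpow hxpos] at this
    linarith
  refine (hmain _ (yy ε x) _ _ (Real.log x) _ _ _ M _ a1 a2 a3 a4 a5 a6 a7 a8 a9 hU hM1
    (by linarith)).trans (hfin.trans (le_of_eq ?_))
  rw [Real.exp_sub, Real.exp_log hxpos, Real.rpow_def_of_pos hLpos, ← hsdef, mul_comm s, mul_div_assoc]
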